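/- arXiv:2308.07594 — 5 statements merged into one kernel-verified Lean document; each statement's English description precedes it below -/
import Mathlib

section
/- For every binary string b there exist at most three finite continued fraction strings v with E(v) = b; that is, at most three continued fraction cylinders are mapped to a given dyadic interval under the encoding E. -/
open MeasureTheory Filter

/-- The Gauss map `T x = 1/x - ⌊1/x⌋`. -/
noncomputable def gaussMap (x : ℝ) : ℝ := 1 / x - ⌊1 / x⌋

/-- The `i`-th continued fraction digit (0-indexed): `a_{i+1}(x) = ⌊1/T^i(x)⌋`. -/
noncomputable def cfDigit (x : ℝ) (i : ℕ) : ℕ := (⌊1 / (gaussMap^[i] x)⌋).toNat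

/-- The continued fraction cylinder of a finite string of positive integers. -/
def cfCylinder (v : List ℕ+) : Set ℝ :=
  {x | x ∈ Set.Ioo (0 : ℝ) 1 ∧ Irrational x ∧
    ∀ (i : ℕ) (hi : i < v.length), cfDigit x i = (v.get ⟨i, hi⟩ : ℕ)}

/-- The Gauss measure of a set: `γ(A) = (1/ln 2) ∫_A 1/(1+x) dx`. -/
noncomputable def gaussSet (A : Set ℝ) : ℝ := (1 / Real.log 2) * ∫ x in A, 1 / (1 + x)

/-- A continued fraction `s`-gale. -/
def IsCFGale (s : ℝ) (d : List ℕ+ → ℝ) : Prop :=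
  (∀ w, 0 ≤ d w) ∧
  ∀ w : List ℕ+,
    d w * gaussSet (cfCylinder w) ^ s =
      ∑' i : ℕ+, d (w ++ [i]) * gaussSet (cfCylinder (w ++ [i])) ^ s

/-- A binary `s`-gale. -/
def IsBinGale (s : ℝ) (h : List Bool → ℝ) : Prop :=
  (∀ w, 0 ≤ h w) ∧
  ∀ w : List Bool, h (w ++ [false]) + h (w ++ [true]) = (2 : ℝ) ^ s * h w

/-- The real number `0.w` for a finite binary string `w`. -/
noncomputable def binVal (w : List Bool) : ℝ :=
  ∑ i ∈ Finset.range w.length, (if w.getD i false then ((2 : ℝ)⁻¹) ^ (i + 1) else 0)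

/-- The dyadic cylinder `[0.w, 0.w + 2^{-|w|})`. -/
noncomputable def binCylinder (w : List Bool) : Set ℝ :=
  Set.Ico (binVal w) (binVal w + ((2 : ℝ)⁻¹) ^ w.length)

/-- The prefix of length `n` of the continued fraction expansion of `x`. -/
noncomputable def cfPrefix (x : ℝ) (n : ℕ) : List ℕ+ :=
  (List.range n).map fun i => (cfDigit x i).toPNat'

/-- The prefix of length `n` of the binary expansion of `x`. -/
noncomputable def binPrefix (x : ℝ) (n : ℕ) : List Bool :=
  (List.range n).map fun i => decide (⌊x * 2 ^ (i + 1)⌋ % 2 = 1)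

/-- The value of a finite continued fraction. -/
noncomputable def cfVal : List ℕ+ → ℝ
  | [] => 0
  | a :: w => 1 / (((a : ℕ) : ℝ) + cfVal w)

/-- `b` is the leftmost maximal dyadic interval enclosed by the closure of `C_v`. -/
def IsEncoding (v : List ℕ+) (b : List Bool) : Prop :=
  binCylinder b ⊆ closure (cfCylinder v) ∧
  (∀ b' : List Bool, binCylinder b' ⊆ closure (cfCylinder v) → b.length ≤ b'.length) ∧
  (∀ b' : List Bool, b'.length = b.length →
    binCylinder b' ⊆ closure (cfCylinder v) → binVal b ≤ binVal b')

/-- The inverse branch of the Gauss map along `v`. -/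
noncomputable def brF : List ℕ+ → ℝ → ℝ
  | [], y => y
  | a :: w, y => 1 / (((a : ℕ) : ℝ) + brF w y)

lemma pnat_one_le (a : ℕ+) : (1 : ℝ) ≤ ((a : ℕ) : ℝ) := by exact_mod_cast a.one_le

lemma brF_mem (v : List ℕ+) {y : ℝ} (hy : y ∈ Set.Icc (0 : ℝ) 1) : brF v y ∈ Set.Icc (0 : ℝ) 1 := by
  induction v with
  | nil => exact hy
  | cons a w ih =>
    have ha := pnat_one_le a
    have h0 := ih.1
    simp only [brF]
    refine ⟨by positivity, ?_⟩
    rw [div_le_one (by linarith)]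
    linarith

lemma brF_cont (v : List ℕ+) : ContinuousOn (brF v) (Set.Icc 0 1) := by
  induction v with
  | nil => exact continuousOn_id
  | cons a w ih =>
    have ha := pnat_one_le a
    refine ContinuousOn.div continuousOn_const (continuousOn_const.add ih) ?_
    intro y hy
    have h0 := (brF_mem w hy).1
    change ((a : ℕ) : ℝ) + brF w y ≠ 0
    positivity

lemma brF_mono (v : List ℕ+) :
    MonotoneOn (brF v) (Set.Icc 0 1) ∨ AntitoneOn (brF v) (Set.Icc 0 1) := by
  induction v with
  | nil => exact Or.inl (fun x _ y _ h => h)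
  | cons a w ih =>
    have ha := pnat_one_le a
    rcases ih with h | h
    · right
      intro x hx y hy hxy
      have h0 := (brF_mem w hx).1
      have := h hx hy hxy
      exact one_div_le_one_div_of_le (by linarith) (by linarith)
    · left
      intro x hx y hy hxy
      have h0 := (brF_mem w hy).1
      have := h hx hy hxy
      exact one_div_le_one_div_of_le (by linarith) (by linarith)

lemma brF_append (v u : List ℕ+) (y : ℝ) : brF (v ++ u) y = brF v (brF u y) := by
  induction v with
  | nil => rfl
  | cons a w ih => simp [brF, ih]

lemma brF_mobius (v : List ℕ+) : ∃ p p' q q' : ℝ, 0 ≤ q' ∧ q' ≤ q ∧ 0 < q ∧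
    |p' * q - p * q'| = 1 ∧ ∀ y, 0 ≤ y → brF v y = (p' * y + p) / (q' * y + q) := by
  induction v using List.reverseRecOn with
  | nil => exact ⟨0, 1, 1, 0, by simp [brF]⟩
  | append_singleton v a ih =>
    obtain ⟨p, p', q, q', h1, h2, h3, h4, h5⟩ := ih
    have ha := pnat_one_le a
    refine ⟨p * a + p', p, q * a + q', q, h3.le, by nlinarith, by nlinarith, ?_, ?_⟩
    · rw [← h4, ← abs_neg]
      congr 1
      ring
    · intro y hy
      have hay : 0 < ((a : ℕ) : ℝ) + y := by linarith
      rw [brF_append]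
      simp only [brF]
      rw [h5 _ (by positivity)]
      have e1 : q' * (1 / (((a : ℕ) : ℝ) + y)) + q ≠ 0 := by positivity
      have e2 : q * y + (q * ((a : ℕ) : ℝ) + q') ≠ 0 := by positivity
      rw [div_eq_div_iff e1 e2]
      field_simp
      ring

/-- Length of the cylinder. -/
noncomputable def brLen (v : List ℕ+) : ℝ := |brF v 1 - brF v 0|

lemma brLen_half (v : List ℕ+) (a : ℕ+) : brLen (v ++ [a]) ≤ brLen v / 2 := by
  obtain ⟨p, p', q, q', h1, h2, h3, h4, h5⟩ := brF_mobius v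
  have ha := pnat_one_le a
  have key : ∀ y z : ℝ, 0 ≤ y → 0 ≤ z →
      |brF v y - brF v z| = |y - z| / ((q' * y + q) * (q' * z + q)) := by
    intro y z hy hz
    have e1 : 0 < q' * y + q := by positivity
    have e2 : 0 < q' * z + q := by positivity
    have : brF v y - brF v z = (p' * q - p * q') * (y - z) / ((q' * y + q) * (q' * z + q)) := by
      rw [h5 y hy, h5 z hz, div_sub_div _ _ e1.ne' e2.ne']
      congr 1
      ring
    rw [this, abs_div, abs_mul, h4, one_mul, abs_of_pos (mul_pos e1 e2)]
  unfold brLen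
  rw [brF_append, brF_append]
  simp only [brF]
  rw [key _ _ (by positivity) (by positivity), key _ _ zero_le_one le_rfl]
  set A : ℝ := ((a : ℕ) : ℝ) with hA
  have hApos : 0 < A := by linarith
  have hd : |1 / (A + 1) - 1 / (A + 0)| = 1 / (A * (A + 1)) := by
    rw [abs_sub_comm, abs_of_nonneg]
    · field_simp
      ring
    · rw [sub_nonneg]
      exact one_div_le_one_div_of_le (by linarith) (by linarith)
  rw [hd]
  have e : 1 / (A * (A + 1)) / ((q' * (1 / (A + 1)) + q) * (q' * (1 / (A + 0)) + q))
      = 1 / ((q' + q * (A + 1)) * (q' + q * A)) := by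
    rw [div_div]
    congr 1
    field_simp
    ring
  rw [e]
  have e' : |(1 : ℝ) - 0| / ((q' * 1 + q) * (q' * 0 + q)) / 2 = 1 / ((q' + q) * (2 * q)) := by
    simp
    field_simp
  rw [e']
  apply one_div_le_one_div_of_le (by positivity)
  have f1 : q ≤ q * A := by nlinarith
  have f2 : 2 * q ≤ q' + q * (A + 1) := by nlinarith
  calc (q' + q) * (2 * q) ≤ (q' + q * A) * (q' + q * (A + 1)) :=
        mul_le_mul (by linarith) f2 (by positivity) (by positivity)
    _ = _ := by ring

lemma brLen_append (v u : List ℕ+) : brLen (v ++ u) * 2 ^ u.length ≤ brLen v := by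
  induction u using List.reverseRecOn with
  | nil => simp
  | append_singleton u a ih =>
    have := brLen_half (v ++ u) a
    rw [← List.append_assoc, List.length_append, pow_add]
    have hp : (0 : ℝ) < 2 ^ u.length := by positivity
    simp only [List.length_singleton, pow_one]
    nlinarith

lemma brF_image (v : List ℕ+) :
    brF v '' Set.Icc 0 1 = Set.uIcc (brF v 0) (brF v 1) := by
  apply Set.Subset.antisymm
  · rintro _ ⟨y, hy, rfl⟩
    rw [Set.mem_uIcc]
    have h0 : (0 : ℝ) ∈ Set.Icc (0 : ℝ) 1 := by simp
    have h1 : (1 : ℝ) ∈ Set.Icc (0 : ℝ) 1 := by simp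
    rcases brF_mono v with h | h
    · exact Or.inl ⟨h h0 hy hy.1, h hy h1 hy.2⟩
    · exact Or.inr ⟨h hy h1 hy.2, h h0 hy hy.1⟩
  · have := intermediate_value_uIcc (f := brF v) (a := 0) (b := 1)
      (by rw [Set.uIcc_of_le zero_le_one]; exact brF_cont v)
    rwa [Set.uIcc_of_le (zero_le_one (α := ℝ))] at this

lemma brF_irr (v : List ℕ+) (y : ℝ) : Irrational (brF v y) ↔ Irrational y := by
  induction v with
  | nil => rfl
  | cons a w ih =>
    simp only [brF]
    rw [one_div, irrational_inv_iff, irrational_natCast_add_iff, ih]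

lemma gauss_br (a : ℕ+) {z : ℝ} (hz : z ∈ Set.Ioo (0 : ℝ) 1) :
    ⌊1 / (1 / (((a : ℕ) : ℝ) + z))⌋ = ((a : ℕ) : ℤ) ∧ gaussMap (1 / (((a : ℕ) : ℝ) + z)) = z := by
  have h : ⌊1 / (1 / (((a : ℕ) : ℝ) + z))⌋ = ((a : ℕ) : ℤ) := by
    rw [one_div_one_div, Int.floor_eq_iff]
    push_cast
    exact ⟨by linarith [hz.1], by linarith [hz.2]⟩
  refine ⟨h, ?_⟩
  unfold gaussMap
  rw [h, one_div_one_div]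
  push_cast
  ring

lemma cyl_cons (a : ℕ+) (w : List ℕ+) (x : ℝ) :
    x ∈ cfCylinder (a :: w) ↔ ∃ z ∈ cfCylinder w, x = 1 / (((a : ℕ) : ℝ) + z) := by
  have ha := pnat_one_le a
  constructor
  · rintro ⟨hx, hirr, hd⟩
    have hfl : ⌊1 / x⌋ = ((a : ℕ) : ℤ) := by
      have h0 := hd 0 (by simp)
      simp only [cfDigit, Function.iterate_zero, id, List.get_eq_getElem, List.getElem_cons_zero] at h0
      have := a.pos
      omega
    have hg : gaussMap x = 1 / x - ((a : ℕ) : ℝ) := by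
      unfold gaussMap
      rw [hfl]
      simp
    have hgi : Irrational (gaussMap x) := by
      rw [hg, irrational_sub_natCast_iff, one_div, irrational_inv_iff]
      exact hirr
    have h1 := Int.floor_le (1 / x)
    have h2 := Int.lt_floor_add_one (1 / x)
    rw [hfl] at h1 h2
    push_cast at h1 h2
    refine ⟨gaussMap x, ⟨⟨?_, ?_⟩, hgi, ?_⟩, ?_⟩
    · have hge : 0 ≤ gaussMap x := by rw [hg]; linarith
      exact lt_of_le_of_ne hge (fun h => hgi.ne_zero h.symm)
    · rw [hg]; linarith
    · intro i hi
      have := hd (i + 1) (by simpa using hi)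
      simpa [cfDigit, Function.iterate_succ_apply] using this
    · rw [hg]
      have := hx.1.ne'
      field_simp
      ring
  · rintro ⟨z, ⟨hz, hirr, hd⟩, rfl⟩
    obtain ⟨g1, g2⟩ := gauss_br a hz
    have hp : 0 < ((a : ℕ) : ℝ) + z := by linarith [hz.1]
    refine ⟨⟨by positivity, ?_⟩, ?_, ?_⟩
    · rw [div_lt_one hp]
      linarith [hz.1]
    · rw [one_div, irrational_inv_iff, irrational_natCast_add_iff]
      exact hirr
    · intro i hi
      cases i with
      | zero =>
        simp only [cfDigit, Function.iterate_zero, id, List.get_eq_getElem, List.getElem_cons_zero]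
        rw [g1]
        simp
      | succ i =>
        have := hd i (by simpa using hi)
        simp only [cfDigit, Function.iterate_succ_apply] at this ⊢
        rw [g2]
        simpa using this

lemma cyl_eq (v : List ℕ+) :
    cfCylinder v = brF v '' (Set.Ioo (0 : ℝ) 1 ∩ {y | Irrational y}) := by
  induction v with
  | nil =>
    ext x
    simp [cfCylinder, brF]
  | cons a w ih =>
    ext x
    rw [cyl_cons, ih]
    constructor
    · rintro ⟨_, ⟨y, hy, rfl⟩, rfl⟩
      exact ⟨y, hy, rfl⟩
    · rintro ⟨y, hy, rfl⟩
      exact ⟨_, ⟨y, hy, rfl⟩, rfl⟩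

lemma closure_cyl (v : List ℕ+) :
    closure (cfCylinder v) = Set.uIcc (brF v 0) (brF v 1) := by
  rw [← brF_image, cyl_eq]
  have hcl : closure (Set.Ioo (0 : ℝ) 1 ∩ {y | Irrational y}) = Set.Icc 0 1 := by
    rw [dense_irrational.open_subset_closure_inter isOpen_Ioo |> fun h =>
      Set.Subset.antisymm (closure_mono Set.inter_subset_left) (closure_minimal h isClosed_closure),
      closure_Ioo zero_ne_one]
  apply Set.Subset.antisymm
  · apply closure_minimal
    · exact Set.image_mono (fun y hy => ⟨hy.1.1.le, hy.1.2.le⟩)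
    · exact (isCompact_Icc.image_of_continuousOn (brF_cont v)).isClosed
  · have := ContinuousOn.image_closure (f := brF v)
      (s := Set.Ioo (0 : ℝ) 1 ∩ {y | Irrational y}) (by rw [hcl]; exact brF_cont v)
    rwa [hcl] at this

lemma irr_mem_cyl (v : List ℕ+) {x : ℝ} (hx : Irrational x) (h : x ∈ closure (cfCylinder v)) :
    x ∈ cfCylinder v := by
  rw [closure_cyl, ← brF_image] at h
  obtain ⟨y, hy, rfl⟩ := h
  rw [brF_irr] at hx
  rw [cyl_eq]
  exact ⟨y, ⟨⟨lt_of_le_of_ne hy.1 hx.ne_zero.symm, lt_of_le_of_ne hy.2 hx.ne_one⟩, hx⟩, rfl⟩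

lemma prefix_of_common {v w : List ℕ+} {x : ℝ} (hv : x ∈ cfCylinder v) (hw : x ∈ cfCylinder w)
    (hl : v.length ≤ w.length) : v <+: w := by
  rw [List.prefix_iff_eq_take]
  apply List.ext_getElem
  · simp [hl]
  · intro i h1 h2
    have a := hv.2.2 i h1
    have b := hw.2.2 i (h1.trans_le hl)
    rw [a] at b
    rw [List.getElem_take]
    exact PNat.coe_injective b

lemma binVal_cons (c : Bool) (w : List Bool) :
    binVal (c :: w) = (if c then 1 / 2 else 0) + binVal w / 2 := by
  unfold binVal
  rw [List.length_cons, Finset.sum_range_succ', Finset.sum_div]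
  have h0 : (if (c :: w).getD 0 false then ((2 : ℝ)⁻¹) ^ (0 + 1) else 0)
      = (if c then 1 / 2 else 0) := by
    simp
  rw [h0, add_comm]
  refine congrArg (fun t => (if c then (1 / 2 : ℝ) else 0) + t) ?_
  apply Finset.sum_congr rfl
  intro i _
  rw [List.getD_cons_succ]
  split_ifs
  · rw [pow_succ]; ring
  · simp

lemma exists_bin (m : ℕ) : ∀ j : ℕ, j < 2 ^ m →
    ∃ w : List Bool, w.length = m ∧ binVal w = (j : ℝ) / 2 ^ m := by
  induction m with
  | zero =>
    intro j hj
    have : j = 0 := by simpa using hj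
    exact ⟨[], rfl, by simp [binVal, this]⟩
  | succ m ih =>
    intro j hj
    by_cases h : j < 2 ^ m
    · obtain ⟨w, h1, h2⟩ := ih j h
      refine ⟨false :: w, by simp [h1], ?_⟩
      rw [binVal_cons, h2, pow_succ]
      simp
      ring
    · push Not at h
      obtain ⟨w, h1, h2⟩ := ih (j - 2 ^ m) (by rw [pow_succ] at hj; omega)
      refine ⟨true :: w, by simp [h1], ?_⟩
      rw [binVal_cons, h2, pow_succ, Nat.cast_sub h]
      push_cast
      simp
      field_simp
      ring

lemma exists_dyadic {l r : ℝ} (hl : 0 ≤ l) (hr : r ≤ 1) (m : ℕ) (h : 2 / 2 ^ m ≤ r - l) :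
    ∃ w : List Bool, w.length = m ∧ binCylinder w ⊆ Set.Icc l r := by
  have hp : (0 : ℝ) < 2 ^ m := by positivity
  have h1 := Nat.le_ceil (l * 2 ^ m)
  have h2 := Nat.ceil_lt_add_one (a := l * 2 ^ m) (by positivity)
  set j := ⌈l * 2 ^ m⌉₊
  rw [div_le_iff₀ hp] at h
  have hj : (j : ℝ) + 1 ≤ r * 2 ^ m := by nlinarith
  have hj' : (j : ℝ) < 2 ^ m := by nlinarith
  obtain ⟨w, hw, hv⟩ := exists_bin m j (by exact_mod_cast hj')
  refine ⟨w, hw, ?_⟩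
  rintro x ⟨hx1, hx2⟩
  rw [hv] at hx1 hx2
  rw [hw, inv_pow, ← one_div, ← add_div, lt_div_iff₀ hp] at hx2
  rw [div_le_iff₀ hp] at hx1
  constructor
  · by_contra hh
    push Not at hh
    nlinarith
  · by_contra hh
    push Not at hh
    nlinarith

lemma len_lt {v : List ℕ+} {b : List Bool} (h : IsEncoding v b) :
    brLen v < 4 * (2 : ℝ)⁻¹ ^ b.length := by
  have m0 := brF_mem v (y := 0) (by simp)
  have m1 := brF_mem v (y := 1) (by simp)
  by_contra hc
  push Not at hc
  have hle : brLen v ≤ 1 := by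
    unfold brLen
    rw [abs_le]
    constructor <;> linarith [m0.1, m0.2, m1.1, m1.2]
  rcases hb : b.length with _ | m
  · rw [hb] at hc
    norm_num at hc
    linarith
  · have hlen : brLen v = max (brF v 0) (brF v 1) - min (brF v 0) (brF v 1) := by
      rw [max_sub_min_eq_abs]
      rfl
    obtain ⟨w, hw, hsub⟩ := exists_dyadic (l := min (brF v 0) (brF v 1))
      (r := max (brF v 0) (brF v 1)) (le_min m0.1 m1.1) (max_le m0.2 m1.2) m (by
        rw [← hlen]
        refine le_trans (le_of_eq ?_) hc
        rw [hb, pow_succ, inv_pow]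
        field_simp
        norm_num)
    have := h.2.1 w (by rw [closure_cyl]; exact hsub)
    omega

lemma le_len {v : List ℕ+} {b : List Bool} (h : IsEncoding v b) :
    (2 : ℝ)⁻¹ ^ b.length ≤ brLen v := by
  have hp : (0 : ℝ) < (2 : ℝ)⁻¹ ^ b.length := by positivity
  have hs := closure_mono h.1
  rw [closure_closure, closure_cyl, binCylinder, closure_Ico (by linarith)] at hs
  have e1 := hs (Set.left_mem_Icc.2 (by linarith))
  have e2 := hs (Set.right_mem_Icc.2 (by linarith))
  have := Set.abs_sub_le_of_uIcc_subset_uIcc (Set.uIcc_subset_uIcc e1 e2)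
  rw [add_sub_cancel_left, abs_of_pos hp] at this
  exact this

lemma prefix_of_enc {v w : List ℕ+} {b : List Bool} (hv : IsEncoding v b) (hw : IsEncoding w b)
    (hl : v.length ≤ w.length) : v <+: w := by
  have hp : (0 : ℝ) < (2 : ℝ)⁻¹ ^ b.length := by positivity
  obtain ⟨x, hx, h1, h2⟩ := exists_irrational_btwn
    (show binVal b < binVal b + (2 : ℝ)⁻¹ ^ b.length by linarith)
  have hxb : x ∈ binCylinder b := ⟨h1.le, h2⟩
  exact prefix_of_common (irr_mem_cyl v hx (hv.1 hxb)) (irr_mem_cyl w hx (hw.1 hxb)) hl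

theorem stmt5 (b : List Bool) :
    ∃ v₁ v₂ v₃ : List ℕ+, ∀ v : List ℕ+, IsEncoding v b → v = v₁ ∨ v = v₂ ∨ v = v₃ := by
  by_cases hne : ∃ v, IsEncoding v b
  · obtain ⟨v, hv, hmin⟩ : ∃ v, IsEncoding v b ∧ ∀ w, IsEncoding w b → v.length ≤ w.length := by
      classical
      have hex : ∃ n, ∃ v, IsEncoding v b ∧ v.length = n := hne.imp' List.length
        (fun v hv => ⟨v, hv, rfl⟩)
      obtain ⟨v, hv, hn⟩ := Nat.find_spec hex
      exact ⟨v, hv, fun w hw => hn ▸ Nat.find_min' hex ⟨w, hw, rfl⟩⟩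
    have hlen : ∀ w, IsEncoding w b → w = v ∨ w.length = v.length + 1 := by
      intro w hw
      obtain ⟨u, rfl⟩ := prefix_of_enc hv hw (hmin w hw)
      have h1 := len_lt hv
      have h2 := le_len hw
      have h3 := brLen_append v u
      have hp : (0 : ℝ) < (2 : ℝ)⁻¹ ^ b.length := by positivity
      have hu : (2 : ℝ) ^ u.length < 2 ^ 2 := by
        have : (0 : ℝ) < 2 ^ u.length := by positivity
        nlinarith
      have hu' : u.length < 2 := (pow_lt_pow_iff_right₀ (by norm_num)).1 hu
      rcases Nat.eq_zero_or_pos u.length with h0 | h0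
      · left
        rw [List.length_eq_zero_iff.1 h0, List.append_nil]
      · right
        rw [List.length_append]
        omega
    by_cases h2 : ∃ w, IsEncoding w b ∧ w.length = v.length + 1
    · obtain ⟨w, hw, hwl⟩ := h2
      refine ⟨v, w, w, fun z hz => ?_⟩
      rcases hlen z hz with h | h
      · exact Or.inl h
      · exact Or.inr (Or.inl ((prefix_of_enc hz hw (by omega)).eq_of_length (by omega)))
    · refine ⟨v, v, v, fun z hz => ?_⟩
      rcases hlen z hz with h | h
      · exact Or.inl h
      · exact absurd ⟨z, hz, h⟩ h2
  · exact ⟨[], [], [], fun v hv => absurd ⟨v, hv⟩ hne⟩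
end

section
/- Let v = [a_1,…,a_n] be a finite string of positive integers and let i be a positive integer. Then μ(C_{[v,i]}) / μ(C_v) = (s_n + 1) / ((s_n + i)(s_n + i + 1)), where s_n is the value of the reversed finite continued fraction [a_n,…,a_1]. -/
open MeasureTheory Filter

/-- Coefficients `(p, r, q, s)` of the Moebius map attached to a digit string. -/
noncomputable def cfM : List ℕ+ → ℝ × ℝ × ℝ × ℝ
  | [] => (0, 1, 1, 0)
  | a :: w => ((cfM w).2.2.1, (cfM w).2.2.2,
      ((a : ℕ) : ℝ) * (cfM w).2.2.1 + (cfM w).1, ((a : ℕ) : ℝ) * (cfM w).2.2.2 + (cfM w).2.1)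

lemma cfM_append (v : List ℕ+) (i : ℕ+) : cfM (v ++ [i]) =
    (((i : ℕ) : ℝ) * (cfM v).1 + (cfM v).2.1, (cfM v).1,
      ((i : ℕ) : ℝ) * (cfM v).2.2.1 + (cfM v).2.2.2, (cfM v).2.2.1) := by
  induction v with
  | nil => simp [cfM]
  | cons a w ih =>
    simp only [List.cons_append, cfM, ih, Prod.mk.injEq, true_and]
    first | (constructor <;> ring) | (ring_nf; simp)

lemma cfM_pos (v : List ℕ+) : 0 ≤ (cfM v).1 ∧ 0 ≤ (cfM v).2.1 ∧ 0 < (cfM v).2.2.1 ∧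
    0 ≤ (cfM v).2.2.2 ∧ (cfM v).1 ≤ (cfM v).2.2.1 ∧
    (cfM v).1 + (cfM v).2.1 ≤ (cfM v).2.2.1 + (cfM v).2.2.2 ∧
    |(cfM v).2.1 * (cfM v).2.2.1 - (cfM v).1 * (cfM v).2.2.2| = 1 := by
  induction v with
  | nil => simp [cfM]
  | cons a w ih =>
    obtain ⟨h1, h2, h3, h4, h5, h6, h7⟩ := ih
    have ha : (1 : ℝ) ≤ ((a : ℕ) : ℝ) := by exact_mod_cast a.pos
    simp only [cfM]
    refine ⟨h3.le, h4, by positivity, by positivity, by nlinarith, by nlinarith, ?_⟩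
    rw [← h7, ← abs_neg]
    congr 1
    ring

lemma cfVal_reverse (v : List ℕ+) : cfVal v.reverse = (cfM v).2.2.2 / (cfM v).2.2.1 := by
  induction v using List.reverseRecOn with
  | nil => simp [cfM, cfVal]
  | append_singleton w i ih =>
    have h3 := (cfM_pos w).2.2.1
    have h4 := (cfM_pos w).2.2.2.1
    have ha : (1 : ℝ) ≤ ((i : ℕ) : ℝ) := by exact_mod_cast i.pos
    have : 0 < ((i : ℕ) : ℝ) * (cfM w).2.2.1 + (cfM w).2.2.2 := by positivity
    rw [List.reverse_append, cfM_append]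
    simp only [List.reverse_singleton, List.singleton_append, cfVal, ih]
    have h : ((i : ℕ) : ℝ) + (cfM w).2.2.2 / (cfM w).2.2.1 =
      (((i : ℕ) : ℝ) * (cfM w).2.2.1 + (cfM w).2.2.2) / (cfM w).2.2.1 := by
      field_simp
    rw [h, one_div_div]

lemma mem_cyl_cons (a : ℕ+) (w : List ℕ+) (x : ℝ) : x ∈ cfCylinder (a :: w) ↔
    0 < x ∧ Irrational x ∧ 1 / x - ((a : ℕ) : ℝ) ∈ cfCylinder w := by
  have ha : (1 : ℝ) ≤ ((a : ℕ) : ℝ) := by exact_mod_cast a.pos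
  have key : ∀ (h : ⌊1 / x⌋ = ((a : ℕ) : ℤ)),
      gaussMap x = 1 / x - ((a : ℕ) : ℝ) := by
    intro h
    simp [gaussMap, ← one_div, h]
  have hirr : Irrational x → Irrational (1 / x - ((a : ℕ) : ℝ)) := by
    intro h
    rw [one_div]
    exact (irrational_inv_iff.2 h).sub_natCast _
  constructor
  · rintro ⟨⟨h0, h1⟩, hi, hd⟩
    have hf : ⌊1 / x⌋ = ((a : ℕ) : ℤ) := by
      have := hd 0 (by simp)
      have hp := a.pos
      simp only [cfDigit, Function.iterate_zero, id, List.get_eq_getElem,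
        List.getElem_cons_zero] at this
      omega
    have hI := hirr hi
    refine ⟨h0, hi, ⟨?_, ?_⟩, hI, ?_⟩
    · have h2 : ((a : ℕ) : ℝ) ≤ 1 / x := by
        have := Int.floor_le (1 / x)
        rw [hf] at this
        exact_mod_cast this
      have h3 := hI.ne_zero
      exact lt_of_le_of_ne (by linarith) (Ne.symm h3)
    · have := Int.lt_floor_add_one (1 / x)
      rw [hf] at this
      push_cast at this
      linarith
    · intro i hi
      have := hd (i + 1) (by simpa using hi)
      simp only [cfDigit, Function.iterate_succ_apply, key hf] at this
      simpa [cfDigit] using this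
  · rintro ⟨h0, hi, ⟨h1, h2⟩, -, hd⟩
    have hf : ⌊1 / x⌋ = ((a : ℕ) : ℤ) := by
      rw [Int.floor_eq_iff]
      push_cast
      constructor <;> linarith
    refine ⟨⟨h0, ?_⟩, hi, ?_⟩
    · by_contra hx
      push Not at hx
      have : 1 / x ≤ 1 := by rw [div_le_one h0]; exact hx
      linarith
    · intro i hi
      cases i with
      | zero => simp only [cfDigit, Function.iterate_zero, id, hf]; simp
      | succ i =>
        have := hd i (by simpa using hi)
        simp only [cfDigit, Function.iterate_succ_apply, key hf]
        simpa [cfDigit] using this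

lemma inv_Ioo {x a A B : ℝ} (hx : 0 < x) (ha : 1 ≤ a) (hA : 0 ≤ A) (hB : 0 ≤ B) :
    (A < 1 / x - a ∧ 1 / x - a < B) ↔ (1 / (a + B) < x ∧ x < 1 / (a + A)) := by
  rw [lt_sub_iff_add_lt, sub_lt_iff_lt_add, lt_div_iff₀ hx, div_lt_iff₀ hx,
    div_lt_iff₀ (by linarith), lt_div_iff₀ (by linarith), and_comm]
  constructor <;> rintro ⟨h1, h2⟩ <;> constructor <;> linarith

lemma inv_uIoo {x a A B : ℝ} (hx : 0 < x) (ha : 1 ≤ a) (hA : 0 ≤ A) (hB : 0 ≤ B) :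
    1 / x - a ∈ Set.uIoo A B ↔ x ∈ Set.uIoo (1 / (a + A)) (1 / (a + B)) := by
  rcases le_total A B with h | h
  · have : 1 / (a + B) ≤ 1 / (a + A) := one_div_le_one_div_of_le (by linarith) (by linarith)
    rw [Set.uIoo_of_le h, Set.uIoo_of_ge this]
    exact inv_Ioo hx ha hA hB
  · have : 1 / (a + A) ≤ 1 / (a + B) := one_div_le_one_div_of_le (by linarith) (by linarith)
    rw [Set.uIoo_of_ge h, Set.uIoo_of_le this]
    exact inv_Ioo hx ha hB hA

lemma mem_cyl (v : List ℕ+) : ∀ x : ℝ, x ∈ cfCylinder v ↔ Irrational x ∧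
    x ∈ Set.uIoo ((cfM v).1 / (cfM v).2.2.1)
      (((cfM v).1 + (cfM v).2.1) / ((cfM v).2.2.1 + (cfM v).2.2.2)) := by
  induction v with
  | nil =>
    intro x
    simp [cfCylinder, cfM, Set.uIoo_of_le, and_comm]
  | cons a w ih =>
    intro x
    have ha : (1 : ℝ) ≤ ((a : ℕ) : ℝ) := by exact_mod_cast a.pos
    obtain ⟨h1, h2, h3, h4, h5, h6, h7⟩ := cfM_pos w
    have hA : 0 ≤ (cfM w).1 / (cfM w).2.2.1 := by positivity
    have hB : 0 ≤ ((cfM w).1 + (cfM w).2.1) / ((cfM w).2.2.1 + (cfM w).2.2.2) := by positivity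
    have eA : 1 / (((a : ℕ) : ℝ) + (cfM w).1 / (cfM w).2.2.1) =
        (cfM (a :: w)).1 / (cfM (a :: w)).2.2.1 := by
      simp only [cfM]
      field_simp
    have eB : 1 / (((a : ℕ) : ℝ) +
          ((cfM w).1 + (cfM w).2.1) / ((cfM w).2.2.1 + (cfM w).2.2.2)) =
        ((cfM (a :: w)).1 + (cfM (a :: w)).2.1) /
          ((cfM (a :: w)).2.2.1 + (cfM (a :: w)).2.2.2) := by
      simp only [cfM]
      have : 0 < (cfM w).2.2.1 + (cfM w).2.2.2 := by positivity
      rw [add_div' _ _ _ this.ne', one_div_div]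
      congr 1
      ring
    rw [mem_cyl_cons, ih, ← eA, ← eB]
    constructor
    · rintro ⟨h0, hi, -, hm⟩
      exact ⟨hi, (inv_uIoo h0 ha hA hB).1 hm⟩
    · rintro ⟨hi, hm⟩
      have h0 : 0 < x := by
        refine lt_of_le_of_lt ?_ hm.1
        exact le_inf (by positivity) (by positivity)
      refine ⟨h0, hi, ?_, (inv_uIoo h0 ha hA hB).2 hm⟩
      rw [one_div]
      exact (irrational_inv_iff.2 hi).sub_natCast _

lemma vol_cyl (v : List ℕ+) : (volume (cfCylinder v)).toReal =
    1 / ((cfM v).2.2.1 * ((cfM v).2.2.1 + (cfM v).2.2.2)) := by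
  obtain ⟨h1, h2, h3, h4, h5, h6, h7⟩ := cfM_pos v
  have hset : cfCylinder v = Set.uIoo ((cfM v).1 / (cfM v).2.2.1)
      (((cfM v).1 + (cfM v).2.1) / ((cfM v).2.2.1 + (cfM v).2.2.2)) \
        Set.range ((↑) : ℚ → ℝ) := by
    ext x
    rw [mem_cyl v x, Set.mem_diff, and_comm]
    rfl
  have hs : 0 < (cfM v).2.2.1 + (cfM v).2.2.2 := by positivity
  rw [hset, measure_sdiff_null ((Set.countable_range _).measure_zero volume), Set.uIoo, Real.volume_Ioo,
    ENNReal.toReal_ofReal (by simp), max_sub_min_eq_abs]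
  have : ((cfM v).1 + (cfM v).2.1) / ((cfM v).2.2.1 + (cfM v).2.2.2) -
      (cfM v).1 / (cfM v).2.2.1 =
      ((cfM v).2.1 * (cfM v).2.2.1 - (cfM v).1 * (cfM v).2.2.2) /
        ((cfM v).2.2.1 * ((cfM v).2.2.1 + (cfM v).2.2.2)) := by
    field_simp
    ring
  rw [this, abs_div, h7, abs_of_pos (by positivity)]

theorem stmt8 (v : List ℕ+) (i : ℕ+) :
    (volume (cfCylinder (v ++ [i]))).toReal / (volume (cfCylinder v)).toReal =
      (cfVal v.reverse + 1) /
        ((cfVal v.reverse + ((i : ℕ) : ℝ)) * (cfVal v.reverse + ((i : ℕ) : ℝ) + 1)) := by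
  obtain ⟨-, -, h3, h4, -, -, -⟩ := cfM_pos v
  have ha : (1 : ℝ) ≤ ((i : ℕ) : ℝ) := by exact_mod_cast i.pos
  rw [vol_cyl, vol_cyl, cfVal_reverse, cfM_append]
  simp only
  generalize (cfM v).2.2.1 = q at *
  generalize (cfM v).2.2.2 = r at *
  generalize ((i : ℕ) : ℝ) = a at *
  have e1 : 0 < a * q + r := by positivity
  have e2 : 0 < a * q + r + q := by positivity
  have e3 : 0 < q + r := by positivity
  have f1 : r / q + 1 = (q + r) / q := by field_simp; ring
  have f2 : r / q + a = (a * q + r) / q := by field_simp; ring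
  have f3 : r / q + a + 1 = (a * q + r + q) / q := by field_simp; ring
  rw [f3, f1, f2]
  field_simp
end

section
/- Let 0 < s ≤ 1/2, let x be a finite string of positive integers, and let a be a positive integer. Then ∑_{i=a}^{50a} γ(C_{[x,i]})^s ≥ c · γ(C_x)^s, where c = (ln 25 − 1)/2; moreover c > 1. -/
open MeasureTheory Filter

lemma cyl_nil : cfCylinder [] = {x | Irrational x} ∩ Set.Ioo (0:ℝ) 1 := by
  ext x
  simp [cfCylinder, and_comm]

lemma cyl_cons_s11 (b : ℕ+) (u : List ℕ+) :
    cfCylinder (b :: u) = (fun t : ℝ => 1 / (((b : ℕ) : ℝ) + t)) '' cfCylinder u := by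
  have hb : (1:ℝ) ≤ ((b:ℕ):ℝ) := by exact_mod_cast b.2
  ext x
  constructor
  · rintro ⟨hx, hirr, hd⟩
    have h0 := hd 0 (by simp)
    simp only [cfDigit, Function.iterate_zero, id, List.get_eq_getElem, List.getElem_cons_zero] at h0
    have hfl : ⌊1 / x⌋ = ((b:ℕ):ℤ) := by
      have := b.pos
      omega
    have hT : gaussMap x = 1 / x - ((b:ℕ):ℝ) := by
      rw [gaussMap, hfl]; simp
    have hxirr : Irrational (gaussMap x) := by
      rw [hT, one_div]
      exact hirr.inv.sub_natCast _
    refine ⟨gaussMap x, ⟨⟨?_, ?_⟩, hxirr, ?_⟩, ?_⟩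
    · refine lt_of_le_of_ne ?_ (Ne.symm hxirr.ne_zero)
      exact sub_nonneg.2 (Int.floor_le _)
    · have := Int.lt_floor_add_one (1 / x)
      rw [gaussMap]; linarith
    · intro i hi
      have := hd (i+1) (by simpa using hi)
      simpa [cfDigit, Function.iterate_succ_apply] using this
    · simp [hT]
  · rintro ⟨t, ⟨⟨ht0, ht1⟩, hirr, hd⟩, rfl⟩
    have hpos : (0:ℝ) < ((b:ℕ):ℝ) + t := by linarith
    have hfl : ⌊((b:ℕ):ℝ) + t⌋ = ((b:ℕ):ℤ) := by
      rw [Int.floor_eq_iff]; push_cast; constructor <;> linarith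
    have hT : gaussMap (1 / (((b:ℕ):ℝ) + t)) = t := by
      rw [gaussMap, one_div_one_div, hfl]; simp
    refine ⟨⟨by positivity, ?_⟩, ?_, ?_⟩
    · simp only
      rw [div_lt_one hpos]; linarith
    · simp only [one_div]
      exact (hirr.natCast_add _).inv
    · intro i hi
      cases i with
      | zero =>
        simp only [cfDigit, Function.iterate_zero, id, one_div_one_div, hfl]
        simp
      | succ i =>
        have := hd i (by simpa using hi)
        simp only [cfDigit, Function.iterate_succ_apply, hT]
        simpa [cfDigit] using this

lemma cyl_single (b : ℕ+) : cfCylinder [b] =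
    {x | Irrational x} ∩ Set.Ioo (1 / (((b : ℕ) : ℝ) + 1)) (1 / ((b : ℕ) : ℝ)) := by
  have hb : (1:ℝ) ≤ ((b:ℕ):ℝ) := by exact_mod_cast b.2
  rw [cyl_cons_s11, cyl_nil]
  ext x
  constructor
  · rintro ⟨t, ⟨hirr, ht0, ht1⟩, rfl⟩
    refine ⟨?_, ?_, ?_⟩
    · simp only [one_div]
      exact (Irrational.natCast_add hirr _).inv
    · exact one_div_lt_one_div_of_lt (by linarith) (by linarith)
    · exact one_div_lt_one_div_of_lt (by linarith) (by linarith)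
  · rintro ⟨hirr, h1, h2⟩
    have hx : 0 < x := lt_trans (by positivity) h1
    have h1' : 1 / x < ((b:ℕ):ℝ) + 1 := by
      rw [div_lt_comm₀ (by linarith) hx] at h1; exact h1
    have h2' : ((b:ℕ):ℝ) < 1 / x := by
      rw [lt_div_comm₀ hx (by linarith)] at h2; exact h2
    refine ⟨1 / x - ((b:ℕ):ℝ), ⟨?_, by linarith, by linarith⟩, by simp⟩
    rw [one_div]
    exact Irrational.sub_natCast (Irrational.inv hirr) _

lemma exists_mobius (w : List ℕ+) : ∃ p p' q q' : ℝ, 0 ≤ p ∧ 0 ≤ p' ∧ 0 < q ∧ 0 ≤ q' ∧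
    q' ≤ q ∧ p' + q' ≤ p + q ∧ |p' * q - p * q'| = 1 ∧
    ∀ v, cfCylinder (w ++ v) = (fun t : ℝ => (p + p' * t) / (q + q' * t)) '' cfCylinder v := by
  induction w with
  | nil =>
    refine ⟨0, 1, 1, 0, by simp, by simp, by simp, by simp, by simp, by simp, by simp, ?_⟩
    intro v
    simp
  | cons b u ih =>
    obtain ⟨p, p', q, q', hp, hp', hq, hq', h1, h2, hdet, hv⟩ := ih
    have hb : (1:ℝ) ≤ ((b:ℕ):ℝ) := by exact_mod_cast b.2
    set B : ℝ := ((b:ℕ):ℝ)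
    have hmul : 0 ≤ (B - 1) * (q - q') := mul_nonneg (by linarith) (by linarith)
    refine ⟨q, q', B * q + p, B * q' + p', hq.le, hq', by positivity, by positivity,
      by nlinarith, by nlinarith, ?_, ?_⟩
    · rw [← hdet, ← abs_neg]; congr 1; ring
    · intro v
      rw [List.cons_append, cyl_cons_s11, hv, Set.image_image]
      apply Set.image_congr
      rintro t ⟨⟨ht0, ht1⟩, -⟩
      have hd : 0 < q + q' * t := by positivity
      have hd2 : 0 < B * q + p + (B * q' + p') * t := by positivity
      change 1 / (B + _) = _
      have : B + (p + p' * t) / (q + q' * t) =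
          (B * q + p + (B * q' + p') * t) / (q + q' * t) := by
        field_simp; ring
      rw [this, one_div_div]

lemma cyl_subset (v : List ℕ+) : cfCylinder v ⊆ Set.Ioo 0 1 := fun _ h => h.1

lemma meas_irr : MeasurableSet {x : ℝ | Irrational x} := by
  have : {x : ℝ | Irrational x} = (Set.range ((↑) : ℚ → ℝ))ᶜ := rfl
  rw [this]
  exact (Set.countable_range _).measurableSet.compl

lemma irr_ae (S : Set ℝ) : ({x : ℝ | Irrational x} ∩ S : Set ℝ) =ᵐ[volume] S := by
  have h : ({x : ℝ | Irrational x}) =ᵐ[volume] (Set.univ : Set ℝ) := by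
    rw [ae_eq_univ]
    have : {x : ℝ | Irrational x}ᶜ = Set.range ((↑) : ℚ → ℝ) := by
      ext x; simp [Irrational]
    rw [this]
    exact (Set.countable_range _).measure_zero _
  simpa using h.inter (ae_eq_refl S)

lemma integral_change (p p' q q' : ℝ) (hp : 0 ≤ p) (hp' : 0 ≤ p') (hq : 0 < q) (hq' : 0 ≤ q')
    (hdet : |p' * q - p * q'| = 1) (S : Set ℝ) (hS : MeasurableSet S) (hS1 : S ⊆ Set.Ioo 0 1) :
    ∫ x in (fun t : ℝ => (p + p' * t) / (q + q' * t)) '' S, 1 / (1 + x) =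
      ∫ t in S, 1 / ((p + q + (p' + q') * t) * (q + q' * t)) := by
  have hdet0 : p' * q - p * q' ≠ 0 := by
    intro h; rw [h] at hdet; simp at hdet
  have hder : ∀ t ∈ S, HasDerivWithinAt (fun t : ℝ => (p + p' * t) / (q + q' * t))
      ((p' * q - p * q') / (q + q' * t) ^ 2) S t := by
    intro t ht
    have ht0 := (hS1 ht).1
    have hd : q + q' * t ≠ 0 := by positivity
    have hA : HasDerivAt (fun t : ℝ => p + p' * t) p' t := by
      simpa using ((hasDerivAt_id t).const_mul p').const_add p
    have hB : HasDerivAt (fun t : ℝ => q + q' * t) q' t := by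
      simpa using ((hasDerivAt_id t).const_mul q').const_add q
    have := (hA.div hB hd).hasDerivWithinAt (s := S)
    have e : p' * q - p * q' = p' * (q + q' * t) - (p + p' * t) * q' := by ring
    rw [e]
    exact this
  have hinj : Set.InjOn (fun t : ℝ => (p + p' * t) / (q + q' * t)) S := by
    intro t ht u hu h
    have ht0 := (hS1 ht).1
    have hu0 := (hS1 hu).1
    have hd : q + q' * t ≠ 0 := by positivity
    have hd' : q + q' * u ≠ 0 := by positivity
    simp only at h
    rw [div_eq_div_iff hd hd'] at h
    have : (p' * q - p * q') * (t - u) = 0 := by linear_combination h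
    have := (mul_eq_zero.1 this).resolve_left hdet0
    linarith
  rw [integral_image_eq_integral_abs_deriv_smul hS hder hinj]
  apply setIntegral_congr_fun hS
  intro t ht
  have ht0 := (hS1 ht).1
  have hd : 0 < q + q' * t := by positivity
  have hd2 : 0 < p + q + (p' + q') * t := by positivity
  have e : 1 + (p + p' * t) / (q + q' * t) = (p + q + (p' + q') * t) / (q + q' * t) := by
    field_simp; ring
  simp only [smul_eq_mul]
  rw [abs_div, hdet, e, abs_of_pos (by positivity : 0 < (q + q' * t)^2)]
  field_simp

lemma gauss_nonneg (v : List ℕ+) : 0 ≤ ∫ x in cfCylinder v, 1 / (1 + x) := by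
  obtain ⟨p, p', q, q', hp, hp', hq, hq', h1, h2, hdet, hv⟩ := exists_mobius v
  have hm : MeasurableSet (cfCylinder []) := by
    rw [cyl_nil]; exact meas_irr.inter measurableSet_Ioo
  have := hv []
  rw [List.append_nil] at this
  rw [this, integral_change p p' q q' hp hp' hq hq' hdet _ hm (cyl_subset _)]
  apply setIntegral_nonneg hm
  intro t ht
  have := (cyl_subset _ ht).1
  positivity

lemma main_bound (w : List ℕ+) (i : ℕ+) :
    gaussSet (cfCylinder w) * (1 / (4 * (((i:ℕ):ℝ) + 1) ^ 2)) ≤ gaussSet (cfCylinder (w ++ [i])) := by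
  obtain ⟨p, p', q, q', hp, hp', hq, hq', h1, h2, hdet, hv⟩ := exists_mobius w
  have hi : (1:ℝ) ≤ ((i:ℕ):ℝ) := by exact_mod_cast i.2
  set n : ℝ := ((i:ℕ):ℝ)
  have hm : MeasurableSet (cfCylinder []) := by
    rw [cyl_nil]; exact meas_irr.inter measurableSet_Ioo
  have hmi : MeasurableSet (cfCylinder [i]) := by
    rw [cyl_single]; exact meas_irr.inter measurableSet_Ioo
  have hw := hv []
  rw [List.append_nil] at hw
  unfold gaussSet
  rw [hw, hv [i], integral_change p p' q q' hp hp' hq hq' hdet _ hm (cyl_subset _),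
    integral_change p p' q q' hp hp' hq hq' hdet _ hmi (cyl_subset _)]
  have hlog : 0 < 1 / Real.log 2 := by have := Real.log_pos one_lt_two; positivity
  rw [mul_assoc]
  apply mul_le_mul_of_nonneg_left _ hlog.le
  set f : ℝ → ℝ := fun t => 1 / ((p + q + (p' + q') * t) * (q + q' * t)) with hf
  set K : ℝ := 1 / ((p + q) * q) with hK
  have hKpos : 0 < K := by positivity
  have hup : ∀ t ∈ Set.Ioo (0:ℝ) 1, f t ≤ K := by
    rintro t ⟨h0, h1⟩
    apply one_div_le_one_div_of_le (by positivity)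
    apply mul_le_mul _ _ hq.le (by positivity)
    · have : 0 ≤ (p' + q') * t := by positivity
      linarith
    · have : 0 ≤ q' * t := by positivity
      linarith
  have hlo : ∀ t ∈ Set.Ioo (0:ℝ) 1, K / 4 ≤ f t := by
    rintro t ⟨h0, h3⟩
    rw [hK, hf, div_div]
    apply one_div_le_one_div_of_le (by positivity)
    have a1 : (p' + q') * t ≤ p + q := by
      calc _ ≤ (p' + q') * 1 := by gcongr
        _ ≤ _ := by linarith
    have a2 : q' * t ≤ q := by
      calc _ ≤ q' * 1 := by gcongr
        _ ≤ _ := by linarith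
    calc _ ≤ (2 * (p + q)) * (2 * q) := by
          apply mul_le_mul <;> first | positivity | linarith
      _ = _ := by ring
  have hfm : Measurable f := by rw [hf]; fun_prop
  have hint : IntegrableOn f (Set.Ioo 0 1) := by
    apply Measure.integrableOn_of_bounded (M := K) (by simp) hfm.aestronglyMeasurable
    filter_upwards [ae_restrict_mem measurableSet_Ioo] with t ht
    rw [Real.norm_of_nonneg]
    · exact hup t ht
    · have := hlo t ht; linarith
  have hA : ∫ t in cfCylinder [], f t ≤ K := by
    rw [cyl_nil, setIntegral_congr_set (irr_ae _)]
    calc _ ≤ ∫ t in Set.Ioo (0:ℝ) 1, K := setIntegral_mono_on hint (by simp) measurableSet_Ioo hup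
      _ = K := by simp
  have hB : K / 4 * (1 / (n + 1) ^ 2) ≤ ∫ t in cfCylinder [i], f t := by
    have hsub : Set.Ioo (1 / (n + 1)) (1 / n) ⊆ Set.Ioo 0 1 := by
      apply Set.Ioo_subset_Ioo (by positivity)
      rw [div_le_one (by linarith)]; exact hi
    rw [cyl_single, setIntegral_congr_set (irr_ae _)]
    have hle : 1 / (n + 1) ≤ 1 / n := one_div_le_one_div_of_le (by linarith) (by linarith)
    calc _ ≤ (1 / n - 1 / (n + 1)) * (K / 4) := by
          rw [mul_comm]
          gcongr
          have : 1 / n - 1 / (n + 1) = 1 / (n * (n + 1)) := by field_simp; ring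
          rw [this]
          apply one_div_le_one_div_of_le (by positivity)
          nlinarith
      _ = ∫ t in Set.Ioo (1 / (n + 1)) (1 / n), K / 4 := by
          rw [setIntegral_const, Real.volume_real_Ioo_of_le hle, smul_eq_mul]
      _ ≤ _ := setIntegral_mono_on (by simp) (hint.mono_set hsub) measurableSet_Ioo
          (fun t ht => hlo t (hsub ht))
  calc _ ≤ K * (1 / (4 * (n + 1) ^ 2)) := by gcongr
    _ = K / 4 * (1 / (n + 1) ^ 2) := by field_simp
    _ ≤ _ := hB

lemma harm (a n : ℕ) (h : a ≤ n) : Real.log (n + 1) - Real.log (a + 1) ≤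
    ∑ i ∈ Finset.Ico a n, 1 / ((i:ℝ) + 1) := by
  induction n, h using Nat.le_induction with
  | base => simp
  | succ n hn ih =>
    rw [Finset.sum_Ico_succ_top hn]
    have h1 : (0:ℝ) < n + 1 := by positivity
    have h2 : (0:ℝ) < n + 1 + 1 := by positivity
    have := Real.log_le_sub_one_of_pos (div_pos h2 h1)
    rw [Real.log_div h2.ne' h1.ne'] at this
    have e : ((n:ℝ) + 1 + 1) / (n + 1) - 1 = 1 / (n + 1) := by field_simp; ring
    push_cast
    linarith

lemma harm_pnat (a : ℕ+) : Real.log 25 ≤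
    ∑ i ∈ Finset.Icc a (50 * a), 1 / (((i:ℕ):ℝ) + 1) := by
  have ha : (1:ℝ) ≤ ((a:ℕ):ℝ) := by exact_mod_cast a.2
  have e : ∑ i ∈ Finset.Icc a (50 * a), 1 / (((i:ℕ):ℝ) + 1) =
      ∑ i ∈ Finset.Ico (a:ℕ) (50 * a + 1), 1 / ((i:ℝ) + 1) := by
    have h := PNat.map_subtype_embedding_Icc a (50 * a)
    have h2 : Finset.Ico (a:ℕ) (50 * a + 1) = Finset.Icc (a:ℕ) ((50 * a : ℕ+) : ℕ) := by
      ext; simp [Nat.lt_succ_iff]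
    rw [h2, ← h]
    exact (Finset.sum_map (Finset.Icc a (50 * a)) (Function.Embedding.subtype fun n : ℕ => 0 < n)
      (fun i : ℕ => 1 / ((i:ℝ) + 1))).symm
  rw [e]
  refine le_trans ?_ (harm _ _ (by omega))
  rw [← Real.log_div (by positivity) (by positivity)]
  apply Real.log_le_log (by norm_num)
  rw [le_div_iff₀ (by positivity)]
  push_cast
  linarith

lemma log25 : 3 < Real.log 25 := by
  rw [Real.lt_log_iff_exp_lt (by norm_num)]
  have h : Real.exp 3 = Real.exp 1 ^ 3 := by
    rw [← Real.exp_nat_mul]; norm_num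
  rw [h]
  calc _ < (2.7182818286:ℝ) ^ 3 := by
        gcongr
        exact Real.exp_one_lt_d9
    _ < _ := by norm_num

theorem stmt11 (s : ℝ) (h0 : 0 < s) (h1 : s ≤ 1 / 2) (x : List ℕ+) (a : ℕ+) :
    ((Real.log 25 - 1) / 2) * gaussSet (cfCylinder x) ^ s ≤
        ∑ i ∈ Finset.Icc a (50 * a), gaussSet (cfCylinder (x ++ [i])) ^ s ∧
      1 < (Real.log 25 - 1) / 2 := by
  have hl := log25
  refine ⟨?_, by linarith⟩
  have hG : 0 ≤ gaussSet (cfCylinder x) := by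
    have := Real.log_pos one_lt_two
    exact mul_nonneg (by positivity) (gauss_nonneg x)
  have key : ∀ i : ℕ+, 1 / (((i:ℕ):ℝ) + 1) * (gaussSet (cfCylinder x) ^ s / 2) ≤
      gaussSet (cfCylinder (x ++ [i])) ^ s := by
    intro i
    have hi : (1:ℝ) ≤ ((i:ℕ):ℝ) := by exact_mod_cast i.2
    set n : ℝ := ((i:ℕ):ℝ) with hn
    have hk : 1 / (2 * (n + 1)) ≤ (1 / (4 * (n + 1) ^ 2)) ^ s := by
      have e : 1 / (2 * (n + 1)) = (1 / (4 * (n + 1) ^ 2)) ^ ((1:ℝ) / 2) := by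
        rw [← Real.sqrt_eq_rpow, eq_comm, Real.sqrt_eq_iff_mul_self_eq_of_pos (by positivity)]
        field_simp; norm_num
      rw [e]
      apply Real.rpow_le_rpow_of_exponent_ge (by positivity) _ h1
      rw [div_le_one (by positivity)]
      nlinarith
    calc _ = gaussSet (cfCylinder x) ^ s * (1 / (2 * (n + 1))) := by field_simp
      _ ≤ gaussSet (cfCylinder x) ^ s * (1 / (4 * (n + 1) ^ 2)) ^ s := by gcongr
      _ = (gaussSet (cfCylinder x) * (1 / (4 * (n + 1) ^ 2))) ^ s :=
          (Real.mul_rpow hG (by positivity)).symm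
      _ ≤ _ := Real.rpow_le_rpow (by positivity) (main_bound x i) h0.le
  have hGs : 0 ≤ gaussSet (cfCylinder x) ^ s := Real.rpow_nonneg hG s
  calc _ ≤ Real.log 25 * (gaussSet (cfCylinder x) ^ s / 2) := by nlinarith
    _ ≤ (∑ i ∈ Finset.Icc a (50 * a), 1 / (((i:ℕ):ℝ) + 1)) * (gaussSet (cfCylinder x) ^ s / 2) := by
        gcongr
        exact harm_pnat a
    _ = _ := Finset.sum_mul _ _ _
    _ ≤ _ := Finset.sum_le_sum (fun i _ => key i)
end

section
/- Fix 0 < s < 1/2 and define reals a_1 = 1 and, for k ≥ 2, a_k = 2·(k·∏_{i=1}^{k−1} 100·a_i)^{1/s}; set b_k = 50·a_k. Let F_{k−1} be the set of strings [v_1,…,v_{k−1}] of positive integers with a_i ≤ v_i ≤ b_i for 1 ≤ i ≤ k−1 (F_0 consists of the empty string). Then for every k ≥ 1, ∑_{v ∈ F_{k−1}} μ(⋃_{i ∈ ℕ, a_k ≤ i ≤ b_k} C_{[v,i]})^s ≤ 1/k. -/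
open MeasureTheory Filter

/-- The set of strings `[v_1, …, v_m]` of positive integers with `A (i+1) ≤ v_{i+1} ≤ 50 · A (i+1)`. -/
def Fset (A : ℕ → ℝ) (m : ℕ) : Set (List ℕ+) :=
  {l | l.length = m ∧ ∀ (i : ℕ) (hi : i < l.length),
    A (i + 1) ≤ ((l.get ⟨i, hi⟩ : ℕ) : ℝ) ∧ ((l.get ⟨i, hi⟩ : ℕ) : ℝ) ≤ 50 * A (i + 1)}

theorem aux_iter (x : ℝ) (hx : x ∈ Set.Ioo (0:ℝ) 1) (hi : Irrational x) (n : ℕ) :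
    gaussMap^[n] x ∈ Set.Ioo (0:ℝ) 1 ∧ Irrational (gaussMap^[n] x) := by
  induction n with
  | zero => exact ⟨hx, hi⟩
  | succ n ih =>
    rw [Function.iterate_succ_apply']
    obtain ⟨h1, h2⟩ := ih
    have h3 : Irrational (gaussMap (gaussMap^[n] x)) := by
      unfold gaussMap
      rw [one_div]
      exact (irrational_inv_iff.mpr h2).sub_intCast _
    refine ⟨⟨?_, ?_⟩, h3⟩
    · refine lt_of_le_of_ne ?_ (h3.ne_zero).symm
      rw [gaussMap]
      linarith [Int.floor_le (1 / (gaussMap^[n] x))]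
    · rw [gaussMap]
      linarith [Int.lt_floor_add_one (1 / (gaussMap^[n] x))]

theorem aux_digit (x : ℝ) (hx : x ∈ Set.Ioo (0:ℝ) 1) (hi : Irrational x) (n : ℕ) :
    1 / gaussMap^[n] x = (cfDigit x n : ℝ) + gaussMap^[n+1] x := by
  obtain ⟨⟨h1, h2⟩, _⟩ := aux_iter x hx hi n
  rw [Function.iterate_succ_apply']
  have h : (0:ℤ) ≤ ⌊1 / gaussMap^[n] x⌋ := Int.floor_nonneg.mpr (by positivity)
  have h' : ((cfDigit x n : ℤ)) = ⌊1 / gaussMap^[n] x⌋ := by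
    unfold cfDigit; exact Int.toNat_of_nonneg h
  have h'' : ((cfDigit x n : ℝ)) = (⌊1 / gaussMap^[n] x⌋ : ℝ) := by exact_mod_cast h'
  rw [h'']; conv_rhs => rw [gaussMap]
  ring

theorem aux_contr (x y : ℝ) (hx : x ∈ Set.Ioo (0:ℝ) 1) (hi : Irrational x)
    (hy : y ∈ Set.Ioo (0:ℝ) 1) (hj : Irrational y) (n : ℕ)
    (h : ∀ i < n, cfDigit x i = cfDigit y i) :
    |x - y| ≤ |gaussMap^[n] x - gaussMap^[n] y| := by
  induction n with
  | zero => simp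
  | succ n ih =>
    refine (ih fun i hi => h i (by omega)).trans ?_
    have e1 := aux_digit x hx hi n
    have e2 := aux_digit y hy hj n
    rw [h n (by omega)] at e1
    obtain ⟨⟨a1, a2⟩, _⟩ := aux_iter x hx hi n
    obtain ⟨⟨b1, b2⟩, _⟩ := aux_iter y hy hj n
    generalize gaussMap^[n] x = p at *
    generalize gaussMap^[n] y = q at *
    have e3 : p - q = -((gaussMap^[n+1] x - gaussMap^[n+1] y) * (p * q)) := by
      have : gaussMap^[n+1] x - gaussMap^[n+1] y = 1 / p - 1 / q := by linarith
      rw [this]; field_simp; ring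
    rw [e3, abs_neg, abs_mul, abs_of_pos (mul_pos a1 b1)]
    exact mul_le_of_le_one_right (abs_nonneg _) (by nlinarith)

theorem aux_vol (v : List ℕ+) (a b : ℝ) (ha : 0 < a) :
    (volume (⋃ i ∈ {i : ℕ+ | a ≤ ((i : ℕ) : ℝ) ∧ ((i : ℕ) : ℝ) ≤ b},
          cfCylinder (v ++ [i]))).toReal ≤ 1 / a := by
  have key : ∀ x ∈ (⋃ i ∈ {i : ℕ+ | a ≤ ((i : ℕ) : ℝ) ∧ ((i : ℕ) : ℝ) ≤ b},
          cfCylinder (v ++ [i])), x ∈ Set.Ioo (0:ℝ) 1 ∧ Irrational x ∧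
          (∀ (i : ℕ) (hi : i < v.length), cfDigit x i = (v.get ⟨i, hi⟩ : ℕ)) ∧
          0 < gaussMap^[v.length] x ∧ gaussMap^[v.length] x ≤ 1 / a := by
    intro x hx
    simp only [Set.mem_iUnion, Set.mem_setOf_eq] at hx
    obtain ⟨i, ⟨hi1, hi2⟩, hx, hirr, hd⟩ := hx
    obtain ⟨⟨p1, p2⟩, _⟩ := aux_iter x hx hirr v.length
    obtain ⟨⟨q1, q2⟩, _⟩ := aux_iter x hx hirr (v.length + 1)
    refine ⟨hx, hirr, ?_, p1, ?_⟩
    · intro j hj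
      have := hd j (by simp; omega)
      rw [this]
      simp [List.getElem_append_left hj]
    · have h1 := hd v.length (by simp)
      have h2 := aux_digit x hx hirr v.length
      rw [h1] at h2
      simp at h2
      rw [Function.iterate_succ_apply] at q1
      rw [le_div_iff₀ ha]
      have h3 : a ≤ (gaussMap^[v.length] x)⁻¹ := by linarith
      calc _ ≤ gaussMap^[v.length] x * (gaussMap^[v.length] x)⁻¹ := by gcongr
        _ = 1 := mul_inv_cancel₀ p1.ne'
  generalize (⋃ i ∈ {i : ℕ+ | a ≤ ((i : ℕ) : ℝ) ∧ ((i : ℕ) : ℝ) ≤ b},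
          cfCylinder (v ++ [i])) = S at *
  refine ENNReal.toReal_le_of_le_ofReal (by positivity) ((Real.volume_le_diam S).trans ?_)
  refine Metric.ediam_le fun x hx y hy => ?_
  rw [edist_dist]
  refine ENNReal.ofReal_le_ofReal ?_
  obtain ⟨hx, hi, hd, g1, g2⟩ := key x hx
  obtain ⟨hy, hj, hd', g1', g2'⟩ := key y hy
  refine (aux_contr x y hx hi hy hj v.length fun i h => by rw [hd i h, hd' i h]).trans ?_
  rw [abs_le]; constructor <;> linarith

theorem aux_digits_card (a b : ℝ) (hb : 0 ≤ b) :
    {i : ℕ+ | a ≤ ((i : ℕ) : ℝ) ∧ ((i : ℕ) : ℝ) ≤ b}.Finite ∧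
    ({i : ℕ+ | a ≤ ((i : ℕ) : ℝ) ∧ ((i : ℕ) : ℝ) ≤ b}.ncard : ℝ) ≤ b := by
  have hsub : (fun i : ℕ+ => (i : ℕ)) '' {i : ℕ+ | a ≤ ((i : ℕ) : ℝ) ∧ ((i : ℕ) : ℝ) ≤ b} ⊆
      (Finset.Icc 1 ⌊b⌋₊ : Finset ℕ) := by
    rintro _ ⟨i, ⟨_, h⟩, rfl⟩
    simp only [Finset.coe_Icc, Set.mem_Icc]
    exact ⟨i.pos, Nat.le_floor h⟩
  have hinj : Function.Injective (fun i : ℕ+ => (i : ℕ)) := PNat.coe_injective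
  refine ⟨((Finset.finite_toSet _).subset hsub).of_finite_image hinj.injOn, ?_⟩
  rw [← Set.ncard_image_of_injective _ hinj]
  have := Set.ncard_le_ncard hsub (Finset.finite_toSet _)
  rw [Set.ncard_coe_finset, Nat.card_Icc, Nat.add_sub_cancel] at this
  exact (Nat.cast_le.mpr this).trans (Nat.floor_le hb)

theorem aux_card (A : ℕ → ℝ) (hA : ∀ i, 1 ≤ i → 0 < A i) (m : ℕ) :
    (Fset A m).Finite ∧ ((Fset A m).ncard : ℝ) ≤ ∏ i ∈ Finset.Icc 1 m, 100 * A i := by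
  induction m with
  | zero =>
    have : Fset A 0 ⊆ {[]} := by
      rintro l ⟨h, _⟩
      simpa using h
    refine ⟨(Set.finite_singleton _).subset this, ?_⟩
    have := Set.ncard_le_ncard this
    simp at this ⊢
    exact this
  | succ m ih =>
    obtain ⟨f1, c1⟩ := ih
    have hp := hA (m+1) (by omega)
    obtain ⟨f2, c2⟩ := aux_digits_card (A (m+1)) (50 * A (m+1)) (by positivity)
    set D := {i : ℕ+ | A (m+1) ≤ ((i : ℕ) : ℝ) ∧ ((i : ℕ) : ℝ) ≤ 50 * A (m+1)} with hD
    have hsub : Fset A (m+1) ⊆ (fun p : List ℕ+ × ℕ+ => p.1 ++ [p.2]) '' (Fset A m ×ˢ D) := by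
      rintro l ⟨hl, h⟩
      rcases List.eq_nil_or_concat l with rfl | ⟨w, a, rfl⟩
      · simp at hl
      · simp only [List.concat_eq_append] at hl h ⊢
        have hw : w.length = m := by simpa using hl
        refine ⟨(w, a), ⟨⟨hw, ?_⟩, ?_⟩, rfl⟩
        · intro i hi
          change i < w.length at hi
          have := h i (by simp; omega)
          simpa [List.getElem_append_left hi] using this
        · have := h m (by simp; omega)
          subst hw
          simpa [hD] using this
    have ff := (f1.prod f2)
    refine ⟨(ff.image _).subset hsub, ?_⟩
    have h1 := (Set.ncard_le_ncard hsub (ff.image _)).trans (Set.ncard_image_le ff)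
    rw [Set.ncard_prod] at h1
    rw [Finset.prod_Icc_succ_top (by omega)]
    have h2 : ((Fset A (m+1)).ncard : ℝ) ≤ (Fset A m).ncard * D.ncard := by exact_mod_cast h1
    refine h2.trans (mul_le_mul c1 (by linarith) (by positivity) ?_)
    exact (Nat.cast_nonneg _).trans c1

theorem stmt14 (s : ℝ) (h0 : 0 < s) (h1 : s < 1 / 2) (A : ℕ → ℝ)
    (hA1 : A 1 = 1)
    (hAk : ∀ k : ℕ, 2 ≤ k →
      A k = 2 * ((k : ℝ) * ∏ i ∈ Finset.Icc 1 (k - 1), 100 * A i) ^ (1 / s)) :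
    ∀ k : ℕ, 1 ≤ k →
      (∑' v : Fset A (k - 1),
        (volume (⋃ i ∈ {i : ℕ+ | A k ≤ ((i : ℕ) : ℝ) ∧ ((i : ℕ) : ℝ) ≤ 50 * A k},
          cfCylinder ((v : List ℕ+) ++ [i]))).toReal ^ s) ≤ 1 / (k : ℝ) := by
  have hA : ∀ i, 1 ≤ i → 0 < A i := by
    intro i
    induction i using Nat.strong_induction_on with
    | _ i ih =>
      intro hi
      rcases Nat.lt_or_ge i 2 with h | h
      · obtain rfl : i = 1 := by omega
        rw [hA1]; norm_num
      · rw [hAk i h]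
        have : 0 < ∏ j ∈ Finset.Icc 1 (i - 1), 100 * A j := by
          refine Finset.prod_pos fun j hj => ?_
          rw [Finset.mem_Icc] at hj
          have := ih j (by omega) hj.1
          positivity
        have hi' : (0:ℝ) < i := by exact_mod_cast hi
        positivity
  intro k hk
  have hkp : (0:ℝ) < k := by exact_mod_cast hk
  have hP : 0 < ∏ j ∈ Finset.Icc 1 (k - 1), 100 * A j := by
    refine Finset.prod_pos fun j hj => ?_
    rw [Finset.mem_Icc] at hj
    have := hA j hj.1
    positivity
  have hak := hA k hk
  obtain ⟨hf, hc⟩ := aux_card A hA (k - 1)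
  have hpow : (1 / A k) ^ s ≤ 1 / (k * ∏ j ∈ Finset.Icc 1 (k - 1), 100 * A j) := by
    rcases Nat.lt_or_ge k 2 with h | h
    · obtain rfl : k = 1 := by omega
      simp [hA1]
    · rw [Real.div_rpow zero_le_one hak.le, Real.one_rpow]
      refine one_div_le_one_div_of_le (by positivity) ?_
      rw [hAk k h]
      set Q := (k:ℝ) * ∏ j ∈ Finset.Icc 1 (k - 1), 100 * A j with hQ
      have hQ0 : 0 < Q := by positivity
      calc Q = (Q ^ (1 / s)) ^ s := by
            rw [← Real.rpow_mul hQ0.le, one_div_mul_cancel h0.ne', Real.rpow_one]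
        _ ≤ (2 * Q ^ (1 / s)) ^ s := by
            have : 0 < Q ^ (1 / s) := by positivity
            exact Real.rpow_le_rpow this.le (by linarith) h0.le
  set P := ∏ j ∈ Finset.Icc 1 (k - 1), 100 * A j with hPdef
  haveI := hf.fintype
  rw [tsum_fintype]
  refine (Finset.sum_le_card_nsmul _ _ (1 / (k * P)) fun v _ => ?_).trans ?_
  · exact (Real.rpow_le_rpow ENNReal.toReal_nonneg (aux_vol _ _ _ hak) h0.le).trans hpow
  · rw [nsmul_eq_mul, Finset.card_univ, ← Nat.card_eq_fintype_card, Nat.card_coe_set_eq]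
    calc _ ≤ P * (1 / (k * P)) := by gcongr
      _ = 1 / k := by field_simp
end

section
/- Fix 0 < s < 1/2 and define reals a_1 = 1 and, for k ≥ 2, a_k = 2·(k·∏_{i=1}^{k−1} 100·a_i)^{1/s}. Let F be the set of irrational x ∈ (0,1) whose continued fraction digits satisfy a_k ≤ a_k(x) ≤ 50·a_k for every k ≥ 1. Then the Hausdorff dimension of F is at most s. -/
open MeasureTheory Filter

open scoped MeasureTheory

lemma gm_mem (x : ℝ) (hx : x ∈ Set.Ioo (0:ℝ) 1) (hi : Irrational x) :
    gaussMap x ∈ Set.Ioo (0:ℝ) 1 ∧ Irrational (gaussMap x) := by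
  have hirr : Irrational (gaussMap x) := by
    unfold gaussMap
    rw [one_div]
    exact (irrational_inv_iff.mpr hi).sub_intCast _
  refine ⟨⟨?_, ?_⟩, hirr⟩
  · have h : 0 ≤ gaussMap x := by
      unfold gaussMap; linarith [Int.floor_le (1 / x)]
    exact lt_of_le_of_ne h (fun h => hirr.ne_zero h.symm)
  · unfold gaussMap; linarith [Int.lt_floor_add_one (1 / x)]

lemma gm_iter_mem (n : ℕ) (x : ℝ) (hx : x ∈ Set.Ioo (0:ℝ) 1) (hi : Irrational x) :
    gaussMap^[n] x ∈ Set.Ioo (0:ℝ) 1 ∧ Irrational (gaussMap^[n] x) := by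
  induction n with
  | zero => exact ⟨hx, hi⟩
  | succ n ih =>
    rw [Function.iterate_succ_apply']
    exact gm_mem _ ih.1 ih.2

lemma digit_cast (x : ℝ) (hx : x ∈ Set.Ioo (0:ℝ) 1) :
    ((⌊1 / x⌋.toNat : ℕ) : ℝ) = (⌊1 / x⌋ : ℝ) ∧ (1:ℝ) ≤ (⌊1 / x⌋ : ℝ) := by
  have h1 : (1:ℤ) ≤ ⌊1 / x⌋ := by
    rw [Int.le_floor]
    push_cast
    rw [le_div_iff₀ hx.1]; linarith [hx.2]
  refine ⟨?_, by exact_mod_cast h1⟩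
  have := Int.toNat_of_nonneg (show 0 ≤ ⌊1 / x⌋ by omega)
  exact_mod_cast this

lemma gm_contract (x y : ℝ) (hx : x ∈ Set.Ioo (0:ℝ) 1) (hy : y ∈ Set.Ioo (0:ℝ) 1)
    (h : ⌊1 / x⌋.toNat = ⌊1 / y⌋.toNat) : |x - y| ≤ |gaussMap x - gaussMap y| := by
  have h1 := (digit_cast x hx).1
  have h2 := (digit_cast y hy).1
  rw [h, h2] at h1
  have e : gaussMap x - gaussMap y = (y - x) / (x * y) := by
    unfold gaussMap
    rw [h1]
    have := hx.1.ne'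
    have := hy.1.ne'
    field_simp
    ring
  have hp : 0 < x * y := mul_pos hx.1 hy.1
  rw [e, abs_div, abs_of_pos hp, le_div_iff₀ hp, abs_sub_comm y x]
  have : x * y ≤ 1 := by nlinarith [hx.1, hx.2, hy.1, hy.2]
  nlinarith [abs_nonneg (x - y)]

lemma gm_iter_contract (n : ℕ) (x y : ℝ) (hx : x ∈ Set.Ioo (0:ℝ) 1) (hix : Irrational x)
    (hy : y ∈ Set.Ioo (0:ℝ) 1) (hiy : Irrational y)
    (h : ∀ i < n, cfDigit x i = cfDigit y i) :
    |x - y| ≤ |gaussMap^[n] x - gaussMap^[n] y| := by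
  induction n with
  | zero => simp
  | succ n ih =>
    refine (ih fun i hi => h i (by omega)).trans ?_
    rw [Function.iterate_succ_apply', Function.iterate_succ_apply']
    exact gm_contract _ _ (gm_iter_mem n x hx hix).1 (gm_iter_mem n y hy hiy).1 (h n (by omega))

lemma gm_iter_le (n : ℕ) (x a : ℝ) (ha : 0 < a) (hx : x ∈ Set.Ioo (0:ℝ) 1) (hix : Irrational x)
    (h : a ≤ (cfDigit x n : ℝ)) : gaussMap^[n] x ≤ 1 / a := by
  have hm := (gm_iter_mem n x hx hix).1
  unfold cfDigit at h
  rw [(digit_cast _ hm).1] at h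
  have := h.trans (Int.floor_le _)
  rw [le_div_iff₀ hm.1] at this
  rw [le_div_iff₀ ha]; linarith

theorem stmt15 (s : ℝ) (h0 : 0 < s) (h1 : s < 1 / 2) (A : ℕ → ℝ)
    (hA1 : A 1 = 1)
    (hAk : ∀ k : ℕ, 2 ≤ k →
      A k = 2 * ((k : ℝ) * ∏ i ∈ Finset.Icc 1 (k - 1), 100 * A i) ^ (1 / s)) :
    dimH {x : ℝ | x ∈ Set.Ioo (0 : ℝ) 1 ∧ Irrational x ∧
        ∀ k : ℕ, 1 ≤ k →
          A k ≤ (cfDigit x (k - 1) : ℝ) ∧ (cfDigit x (k - 1) : ℝ) ≤ 50 * A k} ≤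
      ENNReal.ofReal s := by
  set F := {x : ℝ | x ∈ Set.Ioo (0 : ℝ) 1 ∧ Irrational x ∧
        ∀ k : ℕ, 1 ≤ k →
          A k ≤ (cfDigit x (k - 1) : ℝ) ∧ (cfDigit x (k - 1) : ℝ) ≤ 50 * A k} with hF
  have hs1 : 1 ≤ 1 / s := by rw [le_div_iff₀ h0]; linarith
  have hAge : ∀ k : ℕ, 1 ≤ k → (k : ℝ) ≤ A k := by
    intro k
    induction k using Nat.strong_induction_on with
    | _ k ih =>
      intro hk
      rcases Nat.lt_or_ge k 2 with h | h
      · have : k = 1 := by omega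
        subst this; simp [hA1]
      · have hP : (1:ℝ) ≤ ∏ i ∈ Finset.Icc 1 (k - 1), 100 * A i := by
          apply Finset.one_le_prod
          intro i hi
          rw [Finset.mem_Icc] at hi
          have h3 := ih i (by omega) hi.1
          have h4 : (1:ℝ) ≤ i := by exact_mod_cast hi.1
          linarith
        have hk1 : (1:ℝ) ≤ k := by exact_mod_cast hk
        have hkP : (k:ℝ) ≤ (k : ℝ) * ∏ i ∈ Finset.Icc 1 (k - 1), 100 * A i := by nlinarith
        rw [hAk k h]
        have := Real.self_le_rpow_of_one_le (hk1.trans hkP) hs1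
        linarith
  have hA1' : ∀ k : ℕ, 1 ≤ k → 1 ≤ A k := fun k hk =>
    le_trans (by exact_mod_cast hk) (hAge k hk)
  let N : ℕ → ℕ := fun i => ⌊50 * A (i + 1)⌋₊ + 1
  let t : (n : ℕ) → ((i : Fin n) → Fin (N i)) → Set ℝ := fun n v =>
    {x | x ∈ F ∧ ∀ i : Fin n, cfDigit x i = (v i : ℕ)}
  have hdiam : ∀ n v, Metric.ediam (t n v) ≤ ENNReal.ofReal (1 / A (n + 1)) := by
    intro n v
    apply Metric.ediam_le
    intro x hx y hy
    rw [edist_dist, Real.dist_eq]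
    apply ENNReal.ofReal_le_ofReal
    have hx1 := hx.1
    have hy1 := hy.1
    have hApos : 0 < A (n + 1) := by linarith [hA1' (n + 1) (by omega)]
    refine (gm_iter_contract n x y hx1.1 hx1.2.1 hy1.1 hy1.2.1 ?_).trans ?_
    · intro i hi
      exact (hx.2 ⟨i, hi⟩).trans (hy.2 ⟨i, hi⟩).symm
    · have a1 := (gm_iter_mem n x hx1.1 hx1.2.1).1.1
      have a2 := (gm_iter_mem n y hy1.1 hy1.2.1).1.1
      have b1 := gm_iter_le n x _ hApos hx1.1 hx1.2.1 (hx1.2.2 (n + 1) (by omega)).1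
      have b2 := gm_iter_le n y _ hApos hy1.1 hy1.2.1 (hy1.2.2 (n + 1) (by omega)).1
      rw [abs_le]; constructor <;> linarith
  have hcov : ∀ n, F ⊆ ⋃ v, t n v := by
    intro n x hx
    rw [Set.mem_iUnion]
    refine ⟨fun i => ⟨cfDigit x i, ?_⟩, hx, fun i => rfl⟩
    exact Nat.lt_succ_of_le (Nat.le_floor (hx.2.2 (i + 1) (by omega)).2)
  have hr : Tendsto (fun n : ℕ => ENNReal.ofReal (1 / A (n + 1))) atTop (nhds 0) := by
    rw [← ENNReal.ofReal_zero]
    apply ENNReal.tendsto_ofReal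
    refine squeeze_zero (fun n => ?_) (fun n => ?_) tendsto_one_div_add_atTop_nhds_zero_nat
    · have := hA1' (n + 1) (by omega)
      positivity
    · have := hAge (n + 1) (by omega)
      push_cast at this
      exact one_div_le_one_div_of_le (by positivity) this
  have hmeas := Measure.hausdorffMeasure_le_liminf_sum s F
    (fun n : ℕ => ENNReal.ofReal (1 / A (n + 1))) hr t
    (Eventually.of_forall hdiam) (Eventually.of_forall hcov)
  have hsum : ∀ n ≥ 1, ∑ v, Metric.ediam (t n v) ^ s ≤ 1 := by
    intro n hn
    have hApos : 0 < A (n + 1) := by linarith [hA1' (n + 1) (by omega)]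
    calc ∑ v, Metric.ediam (t n v) ^ s
        ≤ ∑ v : ((i : Fin n) → Fin (N i)), ENNReal.ofReal ((1 / A (n + 1)) ^ s) := by
          apply Finset.sum_le_sum
          intro v _
          rw [← ENNReal.ofReal_rpow_of_pos (by positivity)]
          exact ENNReal.rpow_le_rpow (hdiam n v) h0.le
      _ = ENNReal.ofReal (((∏ i : Fin n, N i : ℕ) : ℝ) * (1 / A (n + 1)) ^ s) := by
          rw [ENNReal.ofReal_mul (by positivity), ENNReal.ofReal_natCast]
          simp
      _ ≤ 1 := by
          rw [← ENNReal.ofReal_one]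
          apply ENNReal.ofReal_le_ofReal
          set P := ∏ i ∈ Finset.Icc 1 n, 100 * A i with hP
          have hNP : ((∏ i : Fin n, N i : ℕ) : ℝ) ≤ P := by
            have e : P = ∏ i ∈ Finset.range n, 100 * A (i + 1) := by
              rw [hP, Finset.range_eq_Ico, Finset.prod_Ico_add' (fun i => 100 * A i) 0 n 1]
              congr 1
            rw [Fin.prod_univ_eq_prod_range (fun i => N i) n, e, Nat.cast_prod]
            apply Finset.prod_le_prod
            · intro i _; positivity
            · intro i _
              have h3 := hA1' (i + 1) (by omega)
              have h4 := Nat.floor_le (show 0 ≤ 50 * A (i + 1) by linarith)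
              simp only [N]
              push_cast
              linarith
          have hPnn : 0 ≤ P := le_trans (by positivity) hNP
          have hpow : A (n + 1) ^ s = 2 ^ s * (((n:ℝ) + 1) * P) := by
            rw [hAk (n + 1) (by omega)]
            simp only [Nat.add_sub_cancel]
            push_cast
            rw [← hP, Real.mul_rpow (by norm_num) (by positivity), ← Real.rpow_mul (by positivity),
              one_div_mul_cancel h0.ne', Real.rpow_one]
          have h2 : (1:ℝ) ≤ 2 ^ s := Real.one_le_rpow (by norm_num) h0.le
          have hle : P ≤ A (n + 1) ^ s := by
            rw [hpow]
            have : P ≤ ((n:ℝ) + 1) * P := by nlinarith [(Nat.cast_nonneg n : (0:ℝ) ≤ n)]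
            nlinarith
          rw [Real.div_rpow (by norm_num) hApos.le, Real.one_rpow, mul_one_div,
            div_le_one (Real.rpow_pos_of_pos hApos s)]
          exact hNP.trans hle
  have hfin : μH[s] F ≤ 1 := by
    refine hmeas.trans ?_
    refine (liminf_le_liminf (v := fun _ => 1) ?_).trans (by simp)
    filter_upwards [eventually_ge_atTop 1] with n hn using hsum n hn
  have := dimH_le_of_hausdorffMeasure_ne_top (d := ⟨s, h0.le⟩) (s := F)
    (ne_top_of_le_ne_top ENNReal.one_ne_top hfin)
  rwa [ENNReal.ofReal, Real.toNNReal_of_nonneg h0.le]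
end
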